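/- (LLP deviations lemma) In the share-model simultaneous first price auction with a mixed Nash equilibrium σ and parameters α > 1, γ > 1, the bidders in I derive large value at equilibrium: Σ_{i∈I} Σ_{j=1}^m v_{ij}·q_{ij} ≥ (1/2 − 1/(2α)) · ( OPT − α·(1 + γ + n/h)·REV(σ) − Σ_{i∈Ī₃} B_i ). -/

import Mathlib

/-!
Share-model simultaneous first price auction with `n` additive budgeted bidders,
`m` items, each divided into `h` identical shares.  Main theorem: for every mixed
Nash equilibrium `σ`, the optimal Liquid Welfare is at most `51.5` times the
expected Liquid Welfare at equilibrium, provided `h ≥ n ≥ 0` and `h ≥ 1`.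
-/

open Finset

/-- A share-model simultaneous first price auction: additive values `v i j ≥ 0`
(each of the `h` shares of item `j` is worth `v i j / h` to bidder `i`), budgets
`B i ≥ 0`, and a deterministic allocation rule `win` awarding every share to a
bidder with the highest bid on it (the winner pays her own bid). -/
structure ShareAuction (n m h : ℕ) where
  v : Fin n → Fin m → ℝ
  v_nonneg : ∀ i j, 0 ≤ v i j
  B : Fin n → ℝ
  B_nonneg : ∀ i, 0 ≤ B i
  win : (Fin n → Fin m → Fin h → ℝ) → Fin m → Fin h → Fin n
  win_max : ∀ (b : Fin n → Fin m → Fin h → ℝ) (j : Fin m) (ℓ : Fin h) (i : Fin n),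
    b i j ℓ ≤ b (win b j ℓ) j ℓ

namespace ShareAuction

variable {n m h : ℕ}

/-- The value bidder `i` derives from the shares she wins under bid profile `b`. -/
noncomputable def val (A : ShareAuction n m h) (i : Fin n) (b : Fin n → Fin m → Fin h → ℝ) : ℝ :=
  ∑ j : Fin m, ∑ ℓ : Fin h, if A.win b j ℓ = i then A.v i j / h else 0

/-- First-price payment: bidder `i` pays her own bid on every share she wins. -/
noncomputable def pay (A : ShareAuction n m h) (i : Fin n) (b : Fin n → Fin m → Fin h → ℝ) : ℝ :=
  ∑ j : Fin m, ∑ ℓ : Fin h, if A.win b j ℓ = i then b i j ℓ else 0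

/-- Quasilinear utility. -/
noncomputable def util (A : ShareAuction n m h) (i : Fin n) (b : Fin n → Fin m → Fin h → ℝ) : ℝ :=
  A.val i b - A.pay i b

end ShareAuction

/-- A mixed bid profile: a product distribution, bidder `i` placing probability
`p i k` on the (nonnegative) bid vector `β i k`, with finite support `Fin (K i)`. -/
structure MixedProfile (n m h : ℕ) where
  K : Fin n → ℕ
  p : ∀ i, Fin (K i) → ℝ
  p_nonneg : ∀ i k, 0 ≤ p i k
  p_sum : ∀ i, ∑ k, p i k = 1
  β : ∀ i, Fin (K i) → Fin m → Fin h → ℝ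
  β_nonneg : ∀ i k j ℓ, 0 ≤ β i k j ℓ

namespace MixedProfile

variable {n m h : ℕ}

/-- Probability of the sample point `ω` of the product distribution. -/
noncomputable def prob (σ : MixedProfile n m h) (ω : ∀ i, Fin (σ.K i)) : ℝ := ∏ i, σ.p i (ω i)

/-- The pure bid profile realized at sample point `ω`. -/
def bids (σ : MixedProfile n m h) (ω : ∀ i, Fin (σ.K i)) :
    Fin n → Fin m → Fin h → ℝ :=
  fun i => σ.β i (ω i)

/-- Expectation of a function of the bid profile under `σ`. -/
noncomputable def expect (σ : MixedProfile n m h)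
    (f : (Fin n → Fin m → Fin h → ℝ) → ℝ) : ℝ :=
  ∑ ω : ∀ i, Fin (σ.K i), σ.prob ω * f (σ.bids ω)

end MixedProfile

/-- `σ` is a mixed Nash equilibrium: payments stay within budgets almost surely,
and no bidder can profit in expectation by deviating to any deterministic
nonnegative bid vector whose bids sum to at most her budget. -/
def IsMixedNash {n m h : ℕ} (A : ShareAuction n m h) (σ : MixedProfile n m h) : Prop :=
  (∀ i (ω : ∀ i, Fin (σ.K i)), σ.prob ω ≠ 0 → A.pay i (σ.bids ω) ≤ A.B i) ∧
  ∀ i (b' : Fin m → Fin h → ℝ), (∀ j ℓ, 0 ≤ b' j ℓ) →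
    (∑ j : Fin m, ∑ ℓ : Fin h, b' j ℓ) ≤ A.B i →
    σ.expect (A.util i) ≥
      ∑ ω : ∀ i, Fin (σ.K i), σ.prob ω * A.util i (Function.update (σ.bids ω) i b')

/-- Expected Liquid Welfare of a mixed profile. -/
noncomputable def LW {n m h : ℕ} (A : ShareAuction n m h) (σ : MixedProfile n m h) : ℝ :=
  ∑ i, σ.expect (fun b => min (A.val i b) (A.B i))

/-- The value bidder `i` derives from a deterministic allocation of shares. -/
noncomputable def allocVal {n m h : ℕ} (A : ShareAuction n m h) (i : Fin n)
    (alloc : Fin m → Fin h → Fin n) : ℝ :=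
  ∑ j : Fin m, ∑ ℓ : Fin h, if alloc j ℓ = i then A.v i j / h else 0

section Quantities

variable {n m h : ℕ}

/-- The winning bid `p_j^ℓ(b) = max_i b_{ij}^ℓ` on share `ℓ` of item `j`
(the winner's bid, which is maximal by `win_max`). -/
noncomputable def wbid (A : ShareAuction n m h) (b : Fin n → Fin m → Fin h → ℝ)
    (j : Fin m) (ℓ : Fin h) : ℝ :=
  b (A.win b j ℓ) j ℓ

/-- Item price `p̄_j = α · Σ_ℓ E_{b∼σ}[p_j^ℓ(b)]`. -/
noncomputable def pbar (A : ShareAuction n m h) (σ : MixedProfile n m h) (α : ℝ)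
    (j : Fin m) : ℝ :=
  α * σ.expect (fun b => ∑ ℓ : Fin h, wbid A b j ℓ)

/-- Expected revenue `REV(σ) = (1/α) Σ_j p̄_j`. -/
noncomputable def REV (A : ShareAuction n m h) (σ : MixedProfile n m h) (α : ℝ) : ℝ :=
  (1 / α) * ∑ j : Fin m, pbar A σ α j

/-- `q i j`: expected fraction of the `h` shares of item `j` won by bidder `i`. -/
noncomputable def q (A : ShareAuction n m h) (σ : MixedProfile n m h)
    (i : Fin n) (j : Fin m) : ℝ :=
  σ.expect (fun b => (∑ ℓ : Fin h, if A.win b j ℓ = i then (1 : ℝ) else 0) / h)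

/-- `Q i = Pr_{b∼σ}[v_i(x_i(b)) ≥ B_i]`. -/
noncomputable def Qbig (A : ShareAuction n m h) (σ : MixedProfile n m h) (i : Fin n) : ℝ :=
  ∑ ω : ∀ i, Fin (σ.K i), if A.B i ≤ A.val i (σ.bids ω) then σ.prob ω else 0

/-- High value items `J_i = {j : v_{ij} ≥ p̄_j}`. -/
noncomputable def Jset (A : ShareAuction n m h) (σ : MixedProfile n m h) (α : ℝ)
    (i : Fin n) : Finset (Fin m) :=
  univ.filter fun j => pbar A σ α j ≤ A.v i j

/-- `I₁ = {i : γ · Σ_{j ∈ J_i} p̄_j q_{ij} ≤ B_i}`. -/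
noncomputable def I1 (A : ShareAuction n m h) (σ : MixedProfile n m h) (α γ : ℝ) :
    Finset (Fin n) :=
  univ.filter fun i => γ * ∑ j ∈ Jset A σ α i, pbar A σ α j * q A σ i j ≤ A.B i

/-- `I₂ = {i : Σ_j p̄_j / h ≤ B_i}`. -/
noncomputable def I2 (A : ShareAuction n m h) (σ : MixedProfile n m h) (α : ℝ) :
    Finset (Fin n) :=
  univ.filter fun i => (∑ j : Fin m, pbar A σ α j / h) ≤ A.B i

/-- `I₃ = {i : Q_i ≤ 1/(2γ)}`. -/
noncomputable def I3 (A : ShareAuction n m h) (σ : MixedProfile n m h) (γ : ℝ) :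
    Finset (Fin n) :=
  univ.filter fun i => Qbig A σ i ≤ 1 / (2 * γ)

/-- `I = I₁ ∩ I₂ ∩ I₃`. -/
noncomputable def Iset (A : ShareAuction n m h) (σ : MixedProfile n m h) (α γ : ℝ) :
    Finset (Fin n) :=
  I1 A σ α γ ∩ I2 A σ α ∩ I3 A σ γ

end Quantities

/-!
On the items with `p̄_j < v_{ij}`, let bidder `i` bid `t j / h` on each share in her part of an
allocation, where `p̄_j < t j ≤ v_{ij}`. A lost share has a winning bid of at least `t j / h`, so by
Markov's inequality she loses it with probability at most `h * E[p_j^ℓ] / t j`. Averaging over the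
cyclic shifts of the shares replaces `h * E[p_j^ℓ]` by `Σ_ℓ E[p_j^ℓ] = p̄_j / α ≤ t j / α`. Letting
`t` tend to `p̄`, her equilibrium value is at least `1 - 1/α` times the excess of her contribution
to `OPT` over the `p̄`-cost of her part. A bidder outside `I` instead has her budget covered by one
of the terms subtracted from `OPT`.
-/

lemma sum_sum_mul_of_sum_eq_one {ι κ R : Type*} [Fintype ι] [Fintype κ] [NonAssocSemiring R]
    (c : κ → R) {w : ι → κ → R} (hw : ∀ j, ∑ i, w i j = 1) :
    ∑ i, ∑ j, c j * w i j = ∑ j, c j := by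
  rw [sum_comm]
  simp only [← mul_sum, hw, mul_one]

lemma sum_sum_map_addRight {G M : Type*} [AddGroup G] [Fintype G] [AddCommMonoid M]
    (T : Finset G) (f : G → M) :
    ∑ s, ∑ x ∈ T.map (Equiv.addRight s).toEmbedding, f x = #T • ∑ x, f x := by
  simp only [sum_map, Equiv.coe_toEmbedding, Equiv.coe_addRight]
  rw [sum_comm, ← sum_const]
  exact sum_congr rfl fun x _ ↦ Equiv.sum_comp (Equiv.addLeft x) f

namespace MixedProfile

variable {n m h : ℕ} (σ : MixedProfile n m h)

lemma prob_nonneg (ω : ∀ i, Fin (σ.K i)) : 0 ≤ σ.prob ω :=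
  prod_nonneg fun i _ ↦ σ.p_nonneg i _

lemma sum_prob : ∑ ω, σ.prob ω = 1 := by
  simp only [prob, ← Fintype.prod_sum, σ.p_sum, prod_const_one]

lemma expect_const (c : ℝ) : σ.expect (fun _ ↦ c) = c := by
  rw [expect, ← sum_mul, sum_prob, one_mul]

lemma expect_const_mul (c : ℝ) (f : (Fin n → Fin m → Fin h → ℝ) → ℝ) :
    σ.expect (fun b ↦ c * f b) = c * σ.expect f := by
  simp only [expect, mul_sum, mul_left_comm]

lemma expect_div_const (f : (Fin n → Fin m → Fin h → ℝ) → ℝ) (c : ℝ) :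
    σ.expect (fun b ↦ f b / c) = σ.expect f / c := by
  simp only [expect, sum_div, mul_div_assoc]

lemma expect_sub (f g : (Fin n → Fin m → Fin h → ℝ) → ℝ) :
    σ.expect (fun b ↦ f b - g b) = σ.expect f - σ.expect g := by
  simp only [expect, mul_sub, sum_sub_distrib]

lemma expect_sum {ι : Type*} (s : Finset ι) (f : ι → (Fin n → Fin m → Fin h → ℝ) → ℝ) :
    σ.expect (fun b ↦ ∑ k ∈ s, f k b) = ∑ k ∈ s, σ.expect (f k) := by
  simp only [expect, mul_sum]
  exact sum_comm

variable {σ} in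
lemma expect_mono {f g : (Fin n → Fin m → Fin h → ℝ) → ℝ}
    (hfg : ∀ ω, f (σ.bids ω) ≤ g (σ.bids ω)) : σ.expect f ≤ σ.expect g :=
  sum_le_sum fun ω _ ↦ mul_le_mul_of_nonneg_left (hfg ω) (σ.prob_nonneg ω)

variable {σ} in
lemma expect_nonneg {f : (Fin n → Fin m → Fin h → ℝ) → ℝ}
    (hf : ∀ ω, 0 ≤ f (σ.bids ω)) : 0 ≤ σ.expect f :=
  sum_nonneg fun ω _ ↦ mul_nonneg (σ.prob_nonneg ω) (hf ω)

end MixedProfile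

section Deviations

variable {n m h : ℕ}

/-- The shares of item `j` that the allocation `alloc` gives to bidder `i`. Since
`A.win b` is itself an allocation, this covers both `q` and `allocVal`. -/
def wonShares (alloc : Fin m → Fin h → Fin n) (i : Fin n) (j : Fin m) : Finset (Fin h) :=
  {ℓ | alloc j ℓ = i}

lemma sum_card_wonShares_div [NeZero h] (alloc : Fin m → Fin h → Fin n) (j : Fin m) :
    ∑ i, (#(wonShares alloc i j) / h : ℝ) = 1 := by
  have hcard : ∑ i, #(wonShares alloc i j) = h := by
    exact (card_eq_sum_card_fiberwise fun ℓ _ ↦ mem_univ (alloc j ℓ)).symm.trans (card_fin h)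
  rw [← sum_div, ← Nat.cast_sum, hcard, div_self (NeZero.ne _)]

variable (A : ShareAuction n m h) (σ : MixedProfile n m h)

lemma allocVal_eq_sum (i : Fin n) (alloc : Fin m → Fin h → Fin n) :
    allocVal A i alloc = ∑ j, A.v i j * (#(wonShares alloc i j) / h) := by
  refine sum_congr rfl fun j _ ↦ ?_
  rw [← sum_filter, sum_const, nsmul_eq_mul, mul_div_left_comm]
  rfl

lemma q_eq_expect (i : Fin n) (j : Fin m) :
    q A σ i j = σ.expect fun b ↦ #(wonShares (A.win b) i j) / h := by
  simp only [q, sum_boole, wonShares]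

lemma q_nonneg (i : Fin n) (j : Fin m) : 0 ≤ q A σ i j := by
  rw [q_eq_expect]
  exact MixedProfile.expect_nonneg fun ω ↦ by positivity

lemma sum_q [NeZero h] (j : Fin m) : ∑ i, q A σ i j = 1 := by
  simp only [q_eq_expect, ← MixedProfile.expect_sum, sum_card_wonShares_div,
    MixedProfile.expect_const]

lemma expect_val (i : Fin n) : σ.expect (A.val i) = ∑ j, A.v i j * q A σ i j := by
  simp only [q_eq_expect, ← MixedProfile.expect_const_mul, ← MixedProfile.expect_sum,
    ← allocVal_eq_sum]
  rfl

lemma sum_v_mul_q_nonneg (i : Fin n) : 0 ≤ ∑ j, A.v i j * q A σ i j :=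
  sum_nonneg fun j _ ↦ mul_nonneg (A.v_nonneg i j) (q_nonneg A σ i j)

lemma expect_val_nonneg (i : Fin n) : 0 ≤ σ.expect (A.val i) :=
  (sum_v_mul_q_nonneg A σ i).trans_eq (expect_val A σ i).symm

lemma expect_util_le_expect_val (i : Fin n) : σ.expect (A.util i) ≤ σ.expect (A.val i) := by
  refine MixedProfile.expect_mono fun ω ↦ sub_le_self _ ?_
  refine sum_nonneg fun j _ ↦ sum_nonneg fun ℓ _ ↦ ?_
  split_ifs
  exacts [σ.β_nonneg _ _ _ _, le_rfl]

lemma wbid_bids_nonneg (ω : ∀ i, Fin (σ.K i)) (j : Fin m) (ℓ : Fin h) :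
    0 ≤ wbid A (σ.bids ω) j ℓ :=
  σ.β_nonneg _ _ _ _

/-- The expected revenue `Σ_ℓ E[p_j^ℓ]` from item `j`, so that `pbar A σ α j` is `α` times it. -/
noncomputable def itemRevenue (j : Fin m) : ℝ :=
  σ.expect fun b ↦ ∑ ℓ, wbid A b j ℓ

variable {α γ : ℝ}

lemma pbar_nonneg (hα : 0 ≤ α) (j : Fin m) : 0 ≤ pbar A σ α j :=
  mul_nonneg hα (MixedProfile.expect_nonneg fun ω ↦ sum_nonneg fun ℓ _ ↦
    wbid_bids_nonneg A σ ω j ℓ)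

lemma sum_pbar_nonneg (hα : 0 ≤ α) : 0 ≤ ∑ j, pbar A σ α j :=
  sum_nonneg fun j _ ↦ pbar_nonneg A σ hα j

lemma sum_pbar_mul_q_nonneg (hα : 0 ≤ α) (i : Fin n) :
    0 ≤ ∑ j, pbar A σ α j * q A σ i j :=
  sum_nonneg fun j _ ↦ mul_nonneg (pbar_nonneg A σ hα j) (q_nonneg A σ i j)

lemma sum_pbar (hα : α ≠ 0) : ∑ j, pbar A σ α j = α * REV A σ α := by
  rw [REV, ← mul_assoc, mul_one_div_cancel hα, one_mul]

/-- Bidder `i` cannot gain by any deterministic deviation within her budget: her part of the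
condition `IsMixedNash`, without almost sure budget feasibility. -/
def IsBestResponse (i : Fin n) : Prop :=
  ∀ b' : Fin m → Fin h → ℝ, (∀ j ℓ, 0 ≤ b' j ℓ) → ∑ j, ∑ ℓ, b' j ℓ ≤ A.B i →
    σ.expect (fun b ↦ A.util i (Function.update b i b')) ≤ σ.expect (A.util i)

/-- The bid vector offering `r j` for each share in `T j` and nothing for the other shares. -/
def uniformBid (T : Fin m → Finset (Fin h)) (r : Fin m → ℝ) (j : Fin m) (ℓ : Fin h) : ℝ :=
  if ℓ ∈ T j then r j else 0

variable {A σ} {T : Fin m → Finset (Fin h)} {i : Fin n}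

lemma le_wbid_of_win_update_ne {b : Fin n → Fin m → Fin h → ℝ} {b' : Fin m → Fin h → ℝ}
    {j : Fin m} {ℓ : Fin h} (hlost : A.win (Function.update b i b') j ℓ ≠ i) :
    b' j ℓ ≤ wbid A b j ℓ := by
  have hmax := A.win_max (Function.update b i b') j ℓ i
  rw [Function.update_self, Function.update_of_ne hlost] at hmax
  exact hmax.trans (A.win_max b j ℓ _)

lemma util_update (b : Fin n → Fin m → Fin h → ℝ) (b' : Fin m → Fin h → ℝ) :
    A.util i (Function.update b i b') =
      ∑ j, ∑ ℓ, if A.win (Function.update b i b') j ℓ = i then A.v i j / h - b' j ℓ else 0 := by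
  simp only [ShareAuction.util, ShareAuction.val, ShareAuction.pay, Function.update_self,
    ← sum_sub_distrib, ite_sub_ite, sub_zero]

lemma sum_le_util_update_uniformBid {b : Fin n → Fin m → Fin h → ℝ} {r : Fin m → ℝ}
    (hb : ∀ j ℓ, 0 ≤ wbid A b j ℓ) (hr : ∀ j, (T j).Nonempty → 0 < r j)
    (hrv : ∀ j, (T j).Nonempty → r j ≤ A.v i j / h) :
    ∑ j, ∑ ℓ ∈ T j, (A.v i j / h - r j) * (1 - wbid A b j ℓ / r j) ≤
      A.util i (Function.update b i (uniformBid T r)) := by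
  rw [util_update]
  refine sum_le_sum fun j _ ↦ ?_
  rw [← univ_inter (T j), ← sum_ite_mem]
  refine sum_le_sum fun ℓ _ ↦ ?_
  by_cases hℓ : ℓ ∈ T j
  · have hrj := hr j ⟨ℓ, hℓ⟩
    have hgain : 0 ≤ A.v i j / h - r j := sub_nonneg.2 (hrv j ⟨ℓ, hℓ⟩)
    have hbid : uniformBid T r j ℓ = r j := if_pos hℓ
    rw [if_pos hℓ, hbid]
    split_ifs with hwin
    · exact mul_le_of_le_one_right hgain (sub_le_self _ (div_nonneg (hb j ℓ) hrj.le))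
    · have hle := le_wbid_of_win_update_ne hwin
      rw [hbid] at hle
      exact mul_nonpos_of_nonneg_of_nonpos hgain (sub_nonpos.2 ((one_le_div hrj).2 hle))
  · have hval : 0 ≤ A.v i j / h := div_nonneg (A.v_nonneg i j) h.cast_nonneg
    rw [if_neg hℓ, uniformBid, if_neg hℓ, sub_zero]
    split_ifs
    exacts [hval, le_rfl]

namespace IsBestResponse

lemma sum_le_expect_val (hσ : IsBestResponse A σ i) {r : Fin m → ℝ}
    (hr : ∀ j, (T j).Nonempty → 0 < r j) (hrv : ∀ j, (T j).Nonempty → r j ≤ A.v i j / h)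
    (hcost : ∑ j, #(T j) * r j ≤ A.B i) :
    ∑ j, ∑ ℓ ∈ T j, (A.v i j / h - r j) * (1 - σ.expect (wbid A · j ℓ) / r j) ≤
      σ.expect (A.val i) := by
  have hbid_nonneg (j : Fin m) (ℓ : Fin h) : 0 ≤ uniformBid T r j ℓ := by
    unfold uniformBid
    split_ifs with hℓ
    exacts [(hr j ⟨ℓ, hℓ⟩).le, le_rfl]
  have hbid_cost : ∑ j, ∑ ℓ, uniformBid T r j ℓ ≤ A.B i := by
    simpa only [uniformBid, sum_ite_mem, univ_inter, sum_const, nsmul_eq_mul] using hcost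
  calc ∑ j, ∑ ℓ ∈ T j, (A.v i j / h - r j) * (1 - σ.expect (wbid A · j ℓ) / r j)
      = σ.expect fun b ↦
          ∑ j, ∑ ℓ ∈ T j, (A.v i j / h - r j) * (1 - wbid A b j ℓ / r j) := by
        simp only [MixedProfile.expect_sum, MixedProfile.expect_const_mul,
          MixedProfile.expect_sub, MixedProfile.expect_const, MixedProfile.expect_div_const]
    _ ≤ σ.expect fun b ↦ A.util i (Function.update b i (uniformBid T r)) :=
        MixedProfile.expect_mono fun ω ↦
          sum_le_util_update_uniformBid (wbid_bids_nonneg A σ ω) hr hrv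
    _ ≤ σ.expect (A.util i) := hσ _ hbid_nonneg hbid_cost
    _ ≤ σ.expect (A.val i) := expect_util_le_expect_val A σ i

lemma sum_mul_one_sub_div_le_expect_val [NeZero h] (hσ : IsBestResponse A σ i) {t : Fin m → ℝ}
    (ht : ∀ j, (T j).Nonempty → 0 < t j) (htv : ∀ j, (T j).Nonempty → t j ≤ A.v i j)
    (hcost : ∑ j, t j * (#(T j) / h) ≤ A.B i) :
    ∑ j, (A.v i j - t j) * (1 - itemRevenue A σ j / t j) * (#(T j) / h) ≤
      σ.expect (A.val i) := by
  have hh : (0 : ℝ) < h := Nat.cast_pos.2 (NeZero.pos h)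
  let gain (j : Fin m) (ℓ : Fin h) : ℝ :=
    (A.v i j / h - t j / h) * (1 - σ.expect (wbid A · j ℓ) / (t j / h))
  let shift (s : Fin h) (j : Fin m) : Finset (Fin h) := (T j).map (Equiv.addRight s).toEmbedding
  have hshift (s : Fin h) : ∑ j, ∑ ℓ ∈ shift s j, gain j ℓ ≤ σ.expect (A.val i) := by
    refine hσ.sum_le_expect_val (fun j hj ↦ div_pos (ht j (map_nonempty.1 hj)) hh)
      (fun j hj ↦ div_le_div_of_nonneg_right (htv j (map_nonempty.1 hj)) hh.le) ?_
    simpa only [shift, card_map, mul_div_left_comm] using hcost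
  have hgain (j : Fin m) (hj : (T j).Nonempty) :
      ∑ ℓ, gain j ℓ = (A.v i j - t j) * (1 - itemRevenue A σ j / t j) := by
    have htj := (ht j hj).ne'
    simp only [gain, ← mul_sum, sum_sub_distrib, ← sum_div, sum_const, card_univ,
      Fintype.card_fin, nsmul_eq_mul, mul_one, itemRevenue, MixedProfile.expect_sum]
    field_simp
  refine le_of_mul_le_mul_left ?_ hh
  calc h * ∑ j, (A.v i j - t j) * (1 - itemRevenue A σ j / t j) * (#(T j) / h)
      = ∑ j, #(T j) • ∑ ℓ, gain j ℓ := by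
        rw [mul_sum]
        refine sum_congr rfl fun j _ ↦ ?_
        rcases (T j).eq_empty_or_nonempty with hj | hj
        · simp only [hj, card_empty, Nat.cast_zero, zero_div, mul_zero, zero_smul]
        · rw [hgain j hj, nsmul_eq_mul]
          field_simp
    _ = ∑ s, ∑ j, ∑ ℓ ∈ shift s j, gain j ℓ := by
        rw [sum_comm]
        exact sum_congr rfl fun j _ ↦ (sum_sum_map_addRight (T j) (gain j)).symm
    _ ≤ ∑ _s : Fin h, σ.expect (A.val i) := sum_le_sum fun s _ ↦ hshift s
    _ = h * σ.expect (A.val i) := by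
        simp only [sum_const, card_univ, Fintype.card_fin, nsmul_eq_mul]

lemma mul_sum_sub_pbar_le_expect_val_of_lineMap [NeZero h] (hα : 0 < α)
    (hσ : IsBestResponse A σ i) (hT : ∀ j, (T j).Nonempty → pbar A σ α j < A.v i j) {θ : ℝ}
    (hθ₀ : 0 < θ) (hθ₁ : θ ≤ 1)
    (hcost : ∑ j, AffineMap.lineMap (pbar A σ α j) (A.v i j) θ * (#(T j) / h : ℝ) ≤ A.B i) :
    (1 - θ) * ((1 - 1 / α) * ∑ j, (A.v i j - pbar A σ α j) * (#(T j) / h)) ≤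
      σ.expect (A.val i) := by
  let t (j : Fin m) : ℝ := AffineMap.lineMap (pbar A σ α j) (A.v i j) θ
  have hpt (j : Fin m) (hj : (T j).Nonempty) : pbar A σ α j < t j :=
    (left_lt_lineMap_iff_lt hθ₀).2 (hT j hj)
  have ht (j : Fin m) (hj : (T j).Nonempty) : 0 < t j :=
    (pbar_nonneg A σ hα.le j).trans_lt (hpt j hj)
  have htv (j : Fin m) (hj : (T j).Nonempty) : t j ≤ A.v i j :=
    (lineMap_le_right_iff_le_one (hT j hj)).2 hθ₁
  refine le_trans ?_ (hσ.sum_mul_one_sub_div_le_expect_val ht htv hcost)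
  rw [mul_left_comm, mul_sum, mul_sum]
  refine sum_le_sum fun j _ ↦ ?_
  rcases (T j).eq_empty_or_nonempty with hj | hj
  · simp only [hj, card_empty, Nat.cast_zero, zero_div, mul_zero, le_rfl]
  have hmarkov : 1 - 1 / α ≤ 1 - itemRevenue A σ j / t j := by
    refine sub_le_sub_left ((div_le_div_iff₀ (ht j hj) hα).2 ?_) 1
    rw [one_mul, mul_comm]
    exact (hpt j hj).le
  have hgap : A.v i j - t j = (1 - θ) * (A.v i j - pbar A σ α j) := by
    simp only [t, AffineMap.lineMap_apply_ring']
    ring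
  calc (1 - 1 / α) * ((1 - θ) * ((A.v i j - pbar A σ α j) * (#(T j) / h)))
      = (A.v i j - t j) * (1 - 1 / α) * (#(T j) / h) := by rw [hgap]; ring
    _ ≤ (A.v i j - t j) * (1 - itemRevenue A σ j / t j) * (#(T j) / h) := by
        have := sub_nonneg.2 (htv j hj)
        gcongr

open scoped Topology in
lemma mul_sum_sub_pbar_le_expect_val [NeZero h] (hα : 0 < α) (hσ : IsBestResponse A σ i)
    (hT : ∀ j, (T j).Nonempty → pbar A σ α j < A.v i j)
    (hcost : ∑ j, pbar A σ α j * (#(T j) / h) < A.B i) :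
    (1 - 1 / α) * ∑ j, (A.v i j - pbar A σ α j) * (#(T j) / h) ≤ σ.expect (A.val i) := by
  set gain := (1 - 1 / α) * ∑ j, (A.v i j - pbar A σ α j) * (#(T j) / h)
  let cost (θ : ℝ) : ℝ :=
    ∑ j, AffineMap.lineMap (pbar A σ α j) (A.v i j) θ * (#(T j) / h : ℝ)
  have hlim : Filter.Tendsto (fun θ ↦ (1 - θ) * gain) (𝓝[>] 0) (𝓝 gain) := by
    have hcont : Continuous fun θ ↦ (1 - θ) * gain := by fun_prop
    simpa only [sub_zero, one_mul] using (hcont.tendsto 0).mono_left nhdsWithin_le_nhds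
  have hcost_cont : Continuous cost := by
    simp only [cost, AffineMap.lineMap_apply_ring']
    fun_prop
  have hcost_near : ∀ᶠ θ in 𝓝 0, cost θ < A.B i := by
    refine (hcost_cont.tendsto 0).eventually_lt_const ?_
    simpa only [cost, AffineMap.lineMap_apply_zero] using hcost
  refine le_of_tendsto hlim ?_
  filter_upwards [Ioo_mem_nhdsGT one_pos, nhdsWithin_le_nhds hcost_near] with θ hθ hθcost
  exact hσ.mul_sum_sub_pbar_le_expect_val_of_lineMap hα hT hθ.1 hθ.2.le hθcost.le

lemma mul_min_sub_le_expect_val [NeZero h] (hα : 1 ≤ α) (hσ : IsBestResponse A σ i)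
    (T : Fin m → Finset (Fin h)) :
    (1 - 1 / α) * (min (∑ j, A.v i j * (#(T j) / h)) (A.B i)
      - ∑ j, pbar A σ α j * (#(T j) / h)) ≤ σ.expect (A.val i) := by
  have hα₀ : 0 < α := one_pos.trans_le hα
  have hκ : 0 ≤ 1 - 1 / α := sub_nonneg.2 ((div_le_one hα₀).2 hα)
  have hp := pbar_nonneg A σ hα₀.le
  by_cases hcost : A.B i ≤ ∑ j, pbar A σ α j * (#(T j) / h)
  · refine (mul_nonpos_of_nonneg_of_nonpos hκ ?_).trans (expect_val_nonneg A σ i)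
    exact sub_nonpos.2 ((min_le_right _ _).trans hcost)
  let T' (j : Fin m) : Finset (Fin h) := if pbar A σ α j < A.v i j then T j else ∅
  have hT' (j : Fin m) (hj : (T' j).Nonempty) : pbar A σ α j < A.v i j := by
    by_contra hlt
    simp only [T', if_neg hlt, Finset.not_nonempty_empty] at hj
  have hcost' : ∑ j, pbar A σ α j * (#(T' j) / h) < A.B i := by
    refine (sum_le_sum fun j _ ↦ ?_).trans_lt (not_le.1 hcost)
    have hsub : T' j ⊆ T j := by
      dsimp only [T']
      split_ifs
      exacts [Subset.rfl, empty_subset _]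
    have hpj := hp j
    gcongr
  have hgain : min (∑ j, A.v i j * (#(T j) / h)) (A.B i) - ∑ j, pbar A σ α j * (#(T j) / h) ≤
      ∑ j, (A.v i j - pbar A σ α j) * (#(T' j) / h) := by
    refine (sub_le_sub_right (min_le_left _ _) _).trans ?_
    rw [← sum_sub_distrib]
    refine sum_le_sum fun j _ ↦ ?_
    rw [← sub_mul]
    by_cases hlt : pbar A σ α j < A.v i j
    · simp only [T', if_pos hlt, le_rfl]
    · simp only [T', if_neg hlt, card_empty, Nat.cast_zero, zero_div, mul_zero]
      exact mul_nonpos_of_nonpos_of_nonneg (sub_nonpos.2 (not_lt.1 hlt)) (by positivity)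
  exact (mul_le_mul_of_nonneg_left hgain hκ).trans
    (hσ.mul_sum_sub_pbar_le_expect_val hα₀ hT' hcost')

end IsBestResponse

variable (A σ)

lemma budget_le_of_notMem_Iset (hα : 0 ≤ α) (hγ : 0 ≤ γ) (hi : i ∉ Iset A σ α γ) :
    A.B i ≤ γ * ∑ j, pbar A σ α j * q A σ i j + (∑ j, pbar A σ α j) / h
      + if i ∈ univ \ I3 A σ γ then A.B i else 0 := by
  have hcost : 0 ≤ γ * ∑ j, pbar A σ α j * q A σ i j :=
    mul_nonneg hγ (sum_pbar_mul_q_nonneg A σ hα i)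
  have hprices : 0 ≤ (∑ j, pbar A σ α j) / h :=
    div_nonneg (sum_pbar_nonneg A σ hα) h.cast_nonneg
  by_cases h3 : i ∈ I3 A σ γ
  · rw [if_neg fun hmem ↦ (mem_sdiff.1 hmem).2 h3]
    by_cases h2 : i ∈ I2 A σ α
    · have h1 : i ∉ I1 A σ α γ := fun h1 ↦
        hi (mem_inter.2 ⟨mem_inter.2 ⟨h1, h2⟩, h3⟩)
      have hsub : γ * ∑ j ∈ Jset A σ α i, pbar A σ α j * q A σ i j ≤
          γ * ∑ j, pbar A σ α j * q A σ i j :=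
        mul_le_mul_of_nonneg_left
          (sum_le_sum_of_subset_of_nonneg (subset_univ _) fun j _ _ ↦
            mul_nonneg (pbar_nonneg A σ hα j) (q_nonneg A σ i j)) hγ
      simp only [I1, mem_filter_univ, not_le] at h1
      linarith
    · simp only [I2, mem_filter_univ, not_le, ← sum_div] at h2
      linarith
  · rw [if_pos (mem_sdiff.2 ⟨mem_univ i, h3⟩)]
    linarith

lemma sum_budget_compl_Iset_le [NeZero h] (hα : 0 < α) (hγ : 0 ≤ γ) :
    ∑ i ∈ (Iset A σ α γ)ᶜ, A.B i ≤
      α * (γ + n / h) * REV A σ α + ∑ i ∈ univ \ I3 A σ γ, A.B i := by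
  let charge (i : Fin n) : ℝ := γ * ∑ j, pbar A σ α j * q A σ i j + (∑ j, pbar A σ α j) / h
    + if i ∈ univ \ I3 A σ γ then A.B i else 0
  have hcharge_nonneg (i : Fin n) : 0 ≤ charge i := by
    refine add_nonneg (add_nonneg (mul_nonneg hγ (sum_pbar_mul_q_nonneg A σ hα.le i))
      (div_nonneg (sum_pbar_nonneg A σ hα.le) h.cast_nonneg)) ?_
    split_ifs
    exacts [A.B_nonneg i, le_rfl]
  calc ∑ i ∈ (Iset A σ α γ)ᶜ, A.B i
      ≤ ∑ i ∈ (Iset A σ α γ)ᶜ, charge i := sum_le_sum fun i hi ↦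
        budget_le_of_notMem_Iset A σ hα.le hγ (mem_compl.1 hi)
    _ ≤ ∑ i, charge i :=
        sum_le_sum_of_subset_of_nonneg (subset_univ _) fun i _ _ ↦ hcharge_nonneg i
    _ = α * (γ + n / h) * REV A σ α + ∑ i ∈ univ \ I3 A σ γ, A.B i := by
        simp only [charge, sum_add_distrib, ← mul_sum, sum_sum_mul_of_sum_eq_one _ (sum_q A σ),
          sum_pbar A σ hα.ne', sum_const, card_univ, Fintype.card_fin, nsmul_eq_mul, sum_ite_mem,
          univ_inter]
        ring

theorem llp_deviations_general (hh : 0 < h) (hα : 1 ≤ α) (hγ : 0 < γ)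
    (hbest : ∀ i ∈ Iset A σ α γ, IsBestResponse A σ i) (alloc : Fin m → Fin h → Fin n) :
    (1 - 1 / α) * (∑ i, min (allocVal A i alloc) (A.B i)
        - α * (1 + γ + n / h) * REV A σ α - ∑ i ∈ univ \ I3 A σ γ, A.B i) ≤
      ∑ i ∈ Iset A σ α γ, ∑ j, A.v i j * q A σ i j := by
  have : NeZero h := ⟨hh.ne'⟩
  have hα₀ : 0 < α := one_pos.trans_le hα
  let cost (i : Fin n) : ℝ := ∑ j, pbar A σ α j * (#(wonShares alloc i j) / h)
  have hcost : ∑ i ∈ Iset A σ α γ, cost i ≤ α * REV A σ α := by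
    rw [← sum_pbar A σ hα₀.ne',
      ← sum_sum_mul_of_sum_eq_one (pbar A σ α) (sum_card_wonShares_div alloc)]
    exact sum_le_sum_of_subset_of_nonneg (subset_univ _) fun i _ _ ↦
      sum_nonneg fun j _ ↦ mul_nonneg (pbar_nonneg A σ hα₀.le j) (by positivity)
  have hsplit : ∑ i, min (allocVal A i alloc) (A.B i) ≤
      ∑ i ∈ Iset A σ α γ, min (allocVal A i alloc) (A.B i) + ∑ i ∈ (Iset A σ α γ)ᶜ, A.B i := by
    rw [← sum_add_sum_compl (Iset A σ α γ)]
    gcongr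
    exact min_le_right _ _
  have hbudget := sum_budget_compl_Iset_le A σ hα₀ hγ.le
  calc _ ≤ (1 - 1 / α) * ∑ i ∈ Iset A σ α γ, (min (allocVal A i alloc) (A.B i) - cost i) := by
        refine mul_le_mul_of_nonneg_left ?_ (sub_nonneg.2 ((div_le_one hα₀).2 hα))
        rw [sum_sub_distrib]
        linarith
    _ ≤ ∑ i ∈ Iset A σ α γ, ∑ j, A.v i j * q A σ i j := by
        rw [mul_sum]
        refine sum_le_sum fun i hi ↦ ?_
        rw [← expect_val, allocVal_eq_sum]
        exact (hbest i hi).mul_min_sub_le_expect_val hα _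

end Deviations

/-- **LLP deviations lemma**: bidders in `I` derive large value at equilibrium.
For every allocation (in particular an optimal one, whose Liquid Welfare is `OPT`),
`Σ_{i∈I} Σ_j v_{ij} q_{ij} ≥ (1/2 − 1/(2α)) (OPT − α(1 + γ + n/h) REV(σ) − Σ_{i∈Ī₃} B_i)`. -/
theorem llp_deviations {n m h : ℕ} (hh : 0 < h)
    (α γ : ℝ) (hα : 1 < α) (hγ : 1 < γ)
    (A : ShareAuction n m h) (σ : MixedProfile n m h) (hNash : IsMixedNash A σ)
    (alloc : Fin m → Fin h → Fin n) :
    ∑ i ∈ Iset A σ α γ, ∑ j : Fin m, A.v i j * q A σ i j ≥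
      (1 / 2 - 1 / (2 * α)) *
        ((∑ i, min (allocVal A i alloc) (A.B i))
          - α * (1 + γ + (n : ℝ) / (h : ℝ)) * REV A σ α
          - ∑ i ∈ univ \ I3 A σ γ, A.B i) := by
  have hsharp := llp_deviations_general A σ hh hα.le (one_pos.trans hγ) (fun i _ ↦ hNash.2 i) alloc
  have hvalue := sum_nonneg fun i (_ : i ∈ Iset A σ α γ) ↦ sum_v_mul_q_nonneg A σ i
  linear_combination (hsharp + hvalue) / 2
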